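/- arXiv:math/0405143 — 5 statements merged into one kernel-verified Lean document; each statement's English description precedes it below -/
import Mathlib

section
/- Let p ≥ 2 be a natural number. For n ≥ 1 set a_n^(p) = (p^n - 1)/(p - 1). Then every positive integer k can be written in exactly one way in the form k = t_1·a_{n_1}^(p) + t_2·a_{n_2}^(p) + ... + t_l·a_{n_l}^(p), where l ≥ 1, the exponents satisfy n_1 > n_2 > ... > n_l > 0, the coefficients satisfy 1 ≤ t_j ≤ p - 1 for all j = 1, ..., l-1, and 1 ≤ t_l ≤ p. -/
/-- A representation of `k` in base-`p` "repunit" form: a nonempty list of pairs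
`(t, n)` with strictly decreasing positive exponents `n`, all digits `t` except
possibly the last in `[1, p-1]`, the last digit in `[1, p]`, and
`k = Σ t * (p^n - 1)/(p - 1)`. -/
def IsRepunitRep (p k : ℕ) (L : List (ℕ × ℕ)) : Prop :=
  L ≠ [] ∧
  L.Chain' (fun a b => a.2 > b.2) ∧
  (∀ x ∈ L, 0 < x.2) ∧
  (∀ x ∈ L.dropLast, 1 ≤ x.1 ∧ x.1 ≤ p - 1) ∧
  (∀ x, L.getLast? = some x → 1 ≤ x.1 ∧ x.1 ≤ p) ∧
  (L.map (fun x => x.1 * ((p ^ x.2 - 1) / (p - 1)))).sum = k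

/-!
Write `a n = 1 + p + ⋯ + p ^ (n - 1)`, so that `a (n + 1) = p * a n + 1`. For a positive `k`, the
list `(t, n) :: L` represents `k` if and only if `a n ≤ k < a (n + 1)`, `t = k / a n`, and `L` is
a representation of the remainder `k % a n`, or empty when this remainder is zero. Indeed,
decreasing exponents mean that `L` contributes less than `a n`, and then the digit bounds `t ≤ p`
(for an empty `L`) and `t ≤ p - 1` (otherwise) both amount to `k ≤ p * a n`. Hence every step of the
greedy algorithm is forced.
-/

open Set

/-- The repunit `a_n^(p)`, whose base-`p` digits are `n` ones. The geometric sum replaces the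
quotient `(p ^ n - 1) / (p - 1)`, which degenerates at `p = 1`. -/
def repunit (p n : ℕ) : ℕ := ∑ i ∈ Finset.range n, p ^ i

/-- A representation of `k` in the sense of `IsRepunitRep`, or the empty list when `k = 0`.
Admitting the empty sum makes the terms after the leading one an expansion of their own sum. -/
def IsRepunitExpansion (p k : ℕ) (L : List (ℕ × ℕ)) : Prop :=
  (L = [] ∧ k = 0) ∨ IsRepunitRep p k L

theorem existsUnique_mem_Ico_succ_of_strictMono {f : ℕ → ℕ} (hf : StrictMono f) {k : ℕ}
    (hk : f 0 ≤ k) : ∃! n, k ∈ Ico (f n) (f (n + 1)) := by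
  have hcover : ⋃ n, Ico (f n) (f (n + 1)) = Ici (f 0) :=
    iUnion_Ico_map_succ_eq_Ici (fun n => hf.monotone n.zero_le)
      hf.not_bddAbove_range_of_wellFoundedLT
  obtain ⟨n, hn⟩ := mem_iUnion.1 (hcover.ge hk)
  refine ⟨n, hn, fun m hm => ?_⟩
  exact hf.monotone.pairwise_disjoint_on_Ico_succ.eq (not_disjoint_iff.2 ⟨k, hm, hn⟩)

theorem mul_add_le_mul_iff_of_lt {a r : ℕ} (hr : r < a) (t p : ℕ) :
    t * a + r ≤ p * a ↔ t < p ∨ t = p ∧ r = 0 := by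
  rcases lt_trichotomy t p with h | rfl | h
  · have : (t + 1) * a ≤ p * a := Nat.mul_le_mul_right a h
    simp only [h, true_or, iff_true]
    linarith
  · simp
  · have : (p + 1) * a ≤ t * a := Nat.mul_le_mul_right a h
    simp only [h.not_gt, h.ne', false_and, or_false, iff_false, not_le]
    linarith

theorem exists_lt_and_eq_mul_add_iff {a : ℕ} (ha : 0 < a) {k t : ℕ} {P : ℕ → Prop} :
    (∃ r < a, k = t * a + r ∧ P r) ↔ t = k / a ∧ P (k % a) := by
  constructor
  · rintro ⟨r, hra, hk, hr⟩
    obtain ⟨rfl, rfl⟩ := (Nat.div_mod_unique ha).2 ⟨(by rw [hk]; ring : r + a * t = k), hra⟩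
    exact ⟨rfl, hr⟩
  · rintro ⟨rfl, hr⟩
    exact ⟨k % a, Nat.mod_lt k ha, (Nat.div_add_mod' k a).symm, hr⟩

section Repunit

variable {p : ℕ}

theorem repunit_eq_div (hp : 2 ≤ p) (n : ℕ) : repunit p n = (p ^ n - 1) / (p - 1) :=
  Nat.geomSum_eq hp n

theorem repunit_zero (p : ℕ) : repunit p 0 = 0 := Finset.sum_range_zero _

theorem repunit_succ (p n : ℕ) : repunit p (n + 1) = p * repunit p n + 1 :=
  geom_sum_succ

theorem repunit_pos_iff {n : ℕ} : 0 < repunit p n ↔ 0 < n := by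
  cases n <;> simp [repunit_zero, repunit_succ]

theorem repunit_strictMono (hp : 0 < p) : StrictMono (repunit p) := by
  refine strictMono_nat_of_lt_succ fun n => ?_
  rw [repunit_succ]
  exact Nat.lt_succ_of_le (Nat.le_mul_of_pos_left _ hp)

theorem lt_repunit_succ_iff {n k : ℕ} : k < repunit p (n + 1) ↔ k ≤ p * repunit p n := by
  rw [repunit_succ, Nat.lt_succ_iff]

theorem repunit_pos_of_mem_Ico {n k : ℕ} (hk : 0 < k)
    (hkn : k ∈ Ico (repunit p n) (repunit p (n + 1))) : 0 < repunit p n :=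
  Nat.pos_of_mul_pos_left (hk.trans_le (lt_repunit_succ_iff.1 hkn.2))

theorem mul_repunit_add_mem_Ico_iff {t n r : ℕ} (hr : r < repunit p n) :
    t * repunit p n + r ∈ Ico (repunit p n) (repunit p (n + 1)) ↔
      1 ≤ t ∧ (t < p ∨ t = p ∧ r = 0) := by
  have hlower : repunit p n ≤ t * repunit p n + r ↔ 1 ≤ t := by
    rcases Nat.eq_zero_or_pos t with rfl | ht
    · simpa using hr
    · exact iff_of_true ((Nat.le_mul_of_pos_left _ ht).trans (Nat.le_add_right _ r)) ht
  rw [mem_Ico, hlower, lt_repunit_succ_iff, mul_add_le_mul_iff_of_lt hr]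

end Repunit

section Representation

variable {p k t n : ℕ} {x : ℕ × ℕ} {L : List (ℕ × ℕ)}

theorem isRepunitRep_iff (hp : 2 ≤ p) :
    IsRepunitRep p k L ↔ L ≠ [] ∧ L.IsChain (fun a b => a.2 > b.2) ∧ (∀ x ∈ L, 0 < x.2) ∧
      (∀ x ∈ L.dropLast, 1 ≤ x.1 ∧ x.1 < p) ∧ (∀ x, L.getLast? = some x → 1 ≤ x.1 ∧ x.1 ≤ p) ∧
      k = (L.map fun x => x.1 * repunit p x.2).sum := by
  simp only [repunit_eq_div hp, Nat.lt_iff_le_pred (zero_lt_two.trans_le hp), eq_comm (a := k)]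
  rfl

theorem isRepunitRep_singleton (hp : 2 ≤ p) :
    IsRepunitRep p k [(t, n)] ↔ 0 < n ∧ 1 ≤ t ∧ t ≤ p ∧ k = t * repunit p n := by
  simp [isRepunitRep_iff hp, and_assoc]

theorem isRepunitRep_cons_cons (hp : 2 ≤ p) :
    IsRepunitRep p k ((t, n) :: x :: L) ↔ x.2 < n ∧ 1 ≤ t ∧ t < p ∧
      ∃ r, k = t * repunit p n + r ∧ IsRepunitRep p r (x :: L) := by
  simp only [isRepunitRep_iff hp, List.isChain_cons_cons, List.dropLast_cons_cons,
    List.getLast?_cons_cons, List.map_cons (a := (t, n)), List.sum_cons, List.forall_mem_cons]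
  grind

theorem IsRepunitRep.exponent_pos (h : IsRepunitRep p k ((t, n) :: L)) : 0 < n :=
  h.2.2.1 (t, n) List.mem_cons_self

theorem IsRepunitRep.mem_Ico (hp : 2 ≤ p) (h : IsRepunitRep p k ((t, n) :: L)) :
    k ∈ Ico (repunit p n) (repunit p (n + 1)) := by
  induction L generalizing k t n with
  | nil =>
    obtain ⟨hn, ht, htp, rfl⟩ := (isRepunitRep_singleton hp).1 h
    exact (mul_repunit_add_mem_Ico_iff (repunit_pos_iff.2 hn)).2
      ⟨ht, htp.lt_or_eq.imp_right (⟨·, rfl⟩)⟩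
  | cons y L ih =>
    obtain ⟨hyn, ht, htp, r, rfl, hr⟩ := (isRepunitRep_cons_cons hp).1 h
    have hrn : r < repunit p n :=
      (ih hr).2.trans_le ((repunit_strictMono (by lia)).monotone hyn)
    exact (mul_repunit_add_mem_Ico_iff hrn).2 ⟨ht, .inl htp⟩

theorem IsRepunitRep.lt_repunit_iff (hp : 2 ≤ p) (h : IsRepunitRep p k (x :: L)) :
    k < repunit p n ↔ x.2 < n := by
  have hmono := repunit_strictMono (p := p) (by lia)
  obtain ⟨hle, hlt⟩ := h.mem_Ico hp
  exact ⟨fun hk => hmono.lt_iff_lt.1 (hle.trans_lt hk), fun hn => hlt.trans_le (hmono.monotone hn)⟩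

theorem IsRepunitRep.pos (hp : 2 ≤ p) (h : IsRepunitRep p k L) : 0 < k := by
  cases L with
  | nil => exact absurd rfl h.1
  | cons x L => exact (repunit_pos_iff.2 h.exponent_pos).trans_le (h.mem_Ico hp).1

theorem isRepunitRep_cons_iff_exists (hp : 2 ≤ p) :
    IsRepunitRep p k ((t, n) :: L) ↔ k ∈ Ico (repunit p n) (repunit p (n + 1)) ∧
      ∃ r < repunit p n, k = t * repunit p n + r ∧ IsRepunitExpansion p r L := by
  constructor
  · intro h
    refine ⟨h.mem_Ico hp, ?_⟩
    cases L with
    | nil =>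
      obtain ⟨hn, -, -, rfl⟩ := (isRepunitRep_singleton hp).1 h
      exact ⟨0, repunit_pos_iff.2 hn, rfl, .inl ⟨rfl, rfl⟩⟩
    | cons x L =>
      obtain ⟨hxn, -, -, r, rfl, hr⟩ := (isRepunitRep_cons_cons hp).1 h
      exact ⟨r, (hr.lt_repunit_iff hp).2 hxn, rfl, .inr hr⟩
  · rintro ⟨hk, r, hrn, rfl, hr⟩
    obtain ⟨ht, htp⟩ := (mul_repunit_add_mem_Ico_iff hrn).1 hk
    rcases hr with ⟨rfl, rfl⟩ | hr
    · exact (isRepunitRep_singleton hp).2 ⟨repunit_pos_iff.1 hrn, ht, by lia, rfl⟩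
    · have htp : t < p := htp.resolve_right fun h => (hr.pos hp).ne' h.2
      cases L with
      | nil => exact absurd rfl hr.1
      | cons x L =>
        exact (isRepunitRep_cons_cons hp).2 ⟨(hr.lt_repunit_iff hp).1 hrn, ht, htp, r, rfl, hr⟩

theorem isRepunitRep_cons_iff_div_mod (hp : 2 ≤ p) (hk : 0 < k) :
    IsRepunitRep p k ((t, n) :: L) ↔ k ∈ Ico (repunit p n) (repunit p (n + 1)) ∧
      t = k / repunit p n ∧ IsRepunitExpansion p (k % repunit p n) L := by
  rw [isRepunitRep_cons_iff_exists hp]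
  exact and_congr_right fun hkn => exists_lt_and_eq_mul_add_iff (repunit_pos_of_mem_Ico hk hkn)

theorem isRepunitExpansion_zero_iff (hp : 2 ≤ p) : IsRepunitExpansion p 0 L ↔ L = [] := by
  have : ¬ IsRepunitRep p 0 L := fun h => (h.pos hp).false
  simp [IsRepunitExpansion, this]

theorem isRepunitExpansion_iff_of_pos (hk : 0 < k) :
    IsRepunitExpansion p k L ↔ IsRepunitRep p k L := by
  simp [IsRepunitExpansion, hk.ne']

theorem existsUnique_isRepunitExpansion (hp : 2 ≤ p) (k : ℕ) : ∃! L, IsRepunitExpansion p k L := by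
  induction k using Nat.strong_induction_on with
  | _ k ih =>
    rcases Nat.eq_zero_or_pos k with rfl | hk
    · simp [isRepunitExpansion_zero_iff hp]
    simp only [isRepunitExpansion_iff_of_pos hk]
    obtain ⟨n, hn, hn_unique⟩ := existsUnique_mem_Ico_succ_of_strictMono
      (repunit_strictMono (p := p) (by lia)) ((repunit_zero p).trans_le k.zero_le)
    have hmod : k % repunit p n < k :=
      (Nat.mod_lt _ (repunit_pos_of_mem_Ico hk hn)).trans_le hn.1
    obtain ⟨L, hL, hL_unique⟩ := ih _ hmod
    refine ⟨(k / repunit p n, n) :: L, ?_, ?_⟩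
    · exact (isRepunitRep_cons_iff_div_mod hp hk).2 ⟨hn, rfl, hL⟩
    · rintro (_ | ⟨⟨t, m⟩, M⟩) hM
      · exact absurd rfl hM.1
      obtain ⟨hm, rfl, hM_tail⟩ := (isRepunitRep_cons_iff_div_mod hp hk).1 hM
      obtain rfl := hn_unique m hm
      rw [hL_unique M hM_tail]

end Representation

theorem unique_repunit_representation (p : ℕ) (hp : 2 ≤ p) (k : ℕ) (hk : 0 < k) :
    ∃! L : List (ℕ × ℕ), IsRepunitRep p k L := by
  simpa only [isRepunitExpansion_iff_of_pos hk] using existsUnique_isRepunitExpansion hp k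
end

section
/- Let p be a prime, let l ≥ 1, let n_1 > n_2 > ... > n_l > 0 be natural numbers, and let t_1, ..., t_l be natural numbers with 1 ≤ t_j ≤ p - 1 for j = 1, ..., l-1 and 1 ≤ t_l ≤ p. Set k = Σ_{i=1}^{l} t_i·(p^{n_i} - 1)/(p - 1) and z = Σ_{i=1}^{l} t_i·p^{n_i}. Then p^k divides z! (the factorial of z). -/
/-!
The number `(a * m)! / (a ! ^ m * m !)` of partitions of an `a * m`-element set into `m` blocks of
size `a` is an integer, so `a ^ m * m ! ∣ (a * m)!`. Taking `m = 1, a, a ^ 2, ...` in turn gives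
`a ^ (1 + a + ... + a ^ (n - 1)) ∣ (a ^ n)!`. Such divisibilities add up because a product of
factorials divides the factorial of the sum.
-/

open Finset
open scoped Nat

theorem pow_mul_factorial_dvd_factorial_mul {a : ℕ} (ha : 0 < a) (m : ℕ) :
    a ^ m * m ! ∣ (a * m)! := by
  have hfactorial : a ! ^ m * m ! ∣ (a * m)! := by
    rw [mul_comm a, ← Nat.uniformBell_mul_eq m ha.ne', mul_assoc]
    exact dvd_mul_left _ _
  have hself : a ^ m ∣ a ! ^ m := pow_dvd_pow_of_dvd (Nat.dvd_factorial ha le_rfl) m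
  exact (mul_dvd_mul_right hself _).trans hfactorial

theorem pow_geomSum_dvd_factorial_pow {a : ℕ} (ha : 0 < a) (n : ℕ) :
    a ^ (∑ i ∈ range n, a ^ i) ∣ (a ^ n)! := by
  induction n with
  | zero => simp
  | succ n ih =>
    calc a ^ (∑ i ∈ range (n + 1), a ^ i)
        = a ^ a ^ n * a ^ (∑ i ∈ range n, a ^ i) := by rw [sum_range_succ, pow_add, mul_comm]
      _ ∣ a ^ a ^ n * (a ^ n)! := mul_dvd_mul_left _ ih
      _ ∣ (a * a ^ n)! := pow_mul_factorial_dvd_factorial_mul ha _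
      _ = (a ^ (n + 1))! := by rw [pow_succ']

theorem factorial_pow_dvd_factorial_mul (m t : ℕ) : m ! ^ t ∣ (t * m)! := by
  simpa using Nat.prod_factorial_dvd_factorial_sum (range t) fun _ => m

theorem pow_sum_mul_dvd_factorial_sum_mul {ι : Type*} (s : Finset ι) (a : ℕ) (t k m : ι → ℕ)
    (h : ∀ i ∈ s, a ^ k i ∣ (m i)!) :
    a ^ (∑ i ∈ s, t i * k i) ∣ (∑ i ∈ s, t i * m i)! :=
  calc a ^ (∑ i ∈ s, t i * k i)
      = ∏ i ∈ s, (a ^ k i) ^ t i := by simp only [← prod_pow_eq_pow_sum, ← pow_mul, mul_comm]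
    _ ∣ ∏ i ∈ s, (m i)! ^ t i := prod_dvd_prod_of_dvd _ _ fun i hi => pow_dvd_pow_of_dvd (h i hi) _
    _ ∣ ∏ i ∈ s, (t i * m i)! :=
      prod_dvd_prod_of_dvd _ _ fun i _ => factorial_pow_dvd_factorial_mul (m i) (t i)
    _ ∣ (∑ i ∈ s, t i * m i)! := Nat.prod_factorial_dvd_factorial_sum s _

theorem pow_dvd_factorial_of_repunit_rep_general {ι : Type*} (s : Finset ι) {a : ℕ} (ha : 2 ≤ a)
    (n t : ι → ℕ) :
    a ^ (∑ i ∈ s, t i * ((a ^ n i - 1) / (a - 1))) ∣ (∑ i ∈ s, t i * a ^ n i)! := by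
  refine pow_sum_mul_dvd_factorial_sum_mul s a t _ _ fun i _ => ?_
  rw [← Nat.geomSum_eq ha]
  exact pow_geomSum_dvd_factorial_pow (Nat.zero_lt_of_lt ha) (n i)

theorem pow_dvd_factorial_of_repunit_rep (p : ℕ) (hp : p.Prime) (l : ℕ)
    (n t : Fin (l + 1) → ℕ) (hanti : StrictAnti n) (hnpos : ∀ i, 0 < n i)
    (ht : ∀ i : Fin (l + 1), i ≠ Fin.last l → 1 ≤ t i ∧ t i ≤ p - 1)
    (htl : 1 ≤ t (Fin.last l) ∧ t (Fin.last l) ≤ p) :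
    p ^ (∑ i, t i * ((p ^ n i - 1) / (p - 1))) ∣
      Nat.factorial (∑ i, t i * p ^ n i) :=
  pow_dvd_factorial_of_repunit_rep_general univ hp.two_le n t
end

section
/- Let p be a prime, let l ≥ 1, let n_1 > n_2 > ... > n_l > 0 be natural numbers, and let t_1, ..., t_l be natural numbers with 1 ≤ t_j ≤ p - 1 for j = 1, ..., l-1 and 1 ≤ t_l ≤ p. Set k = Σ_{i=1}^{l} t_i·(p^{n_i} - 1)/(p - 1) and z = Σ_{i=1}^{l} t_i·p^{n_i}. Then p^k does not divide (z - 1)!. -/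
/-!
Legendre's recursion `v_p(m!) = v_p(⌊m/p⌋!) + ⌊m/p⌋` shows that a block of low digits splits off:
if `b < p ^ n`, then `v_p((a * p ^ n + b)!)` is `v_p(a!) + v_p(b!)` plus `a` times the repunit
`1 + p + ⋯ + p ^ (n - 1)`. Splitting off the top digits of `z - 1` one at a time therefore yields
the terms of `k`, up to the last block, where passing from `(t_l * p ^ n_l)!` to
`(t_l * p ^ n_l - 1)!` costs `n_l + v_p(t_l)`. As `t_l ≤ p`, the summand `v_p(t_l)` cancels against
`v_p(t_l!)`, and the outcome is the exact value `v_p((z - 1)!) = k - n_l < k`.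
-/

open Finset
open scoped Nat

section PadicValuation

variable {p : ℕ} [hp : Fact p.Prime]

theorem padicValNat_factorial_eq_zero_of_lt {a : ℕ} (ha : a < p) : padicValNat p a ! = 0 :=
  padicValNat.eq_zero_of_not_dvd fun h => ha.not_ge (hp.out.dvd_factorial.mp h)

theorem padicValNat_factorial_eq_add_div (m : ℕ) :
    padicValNat p m ! = padicValNat p (m / p)! + m / p := by
  rw [← padicValNat_mul_div_factorial, padicValNat_factorial_mul]

theorem padicValNat_factorial_mul_pow_add {n b : ℕ} (a : ℕ) (hb : b < p ^ n) :
    padicValNat p (a * p ^ n + b)! =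
      padicValNat p a ! + a * ∑ j ∈ range n, p ^ j + padicValNat p b ! := by
  induction n generalizing b with
  | zero =>
    obtain rfl : b = 0 := by simpa using hb
    simp
  | succ n ih =>
    have h_div : (a * p ^ (n + 1) + b) / p = a * p ^ n + b / p := by
      rw [pow_succ, ← mul_assoc, add_comm, Nat.add_mul_div_right _ _ hp.out.pos, add_comm]
    have hb_div : b / p < p ^ n := Nat.div_lt_of_lt_mul (by rwa [← pow_succ'])
    rw [padicValNat_factorial_eq_add_div, h_div, ih hb_div, padicValNat_factorial_eq_add_div b,
      sum_range_succ]
    ring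

theorem padicValNat_factorial_pred_add {m : ℕ} (hm : m ≠ 0) :
    padicValNat p (m - 1)! + padicValNat p m = padicValNat p m ! := by
  rw [← Nat.mul_factorial_pred hm, padicValNat.mul hm (Nat.factorial_ne_zero _), add_comm]

theorem padicValNat_factorial_mul_pow_pred_add {a : ℕ} (ha : a ≠ 0) (n : ℕ) :
    padicValNat p (a * p ^ n - 1)! + n =
      padicValNat p (a - 1)! + a * ∑ j ∈ range n, p ^ j := by
  have hpn : p ^ n ≠ 0 := pow_ne_zero n hp.out.ne_zero
  have h_val : padicValNat p (a * p ^ n) = padicValNat p a + n := by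
    rw [padicValNat.mul ha hpn, padicValNat.prime_pow]
  have h_fact : padicValNat p (a * p ^ n)! = padicValNat p a ! + a * ∑ j ∈ range n, p ^ j := by
    simpa using padicValNat_factorial_mul_pow_add a (pow_pos hp.out.pos n)
  have h_pred := padicValNat_factorial_pred_add (p := p) ha
  have h_pred_pow := padicValNat_factorial_pred_add (p := p) (mul_ne_zero ha hpn)
  omega

end PadicValuation

theorem sum_mul_pow_le_pow_succ {p l : ℕ} {n t : Fin (l + 1) → ℕ} (hn : StrictAnti n)
    (ht : ∀ i : Fin l, t i.castSucc < p) (ht_last : t (Fin.last l) ≤ p) :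
    ∑ i, t i * p ^ n i ≤ p ^ (n 0 + 1) := by
  induction l with
  | zero => simpa [pow_succ'] using Nat.mul_le_mul_right (p ^ n 0) ht_last
  | succ l ih =>
    have h_tail : ∑ i : Fin (l + 1), t i.succ * p ^ n i.succ ≤ p ^ (n (Fin.succ 0) + 1) :=
      ih (hn.comp_strictMono Fin.strictMono_succ) (fun i => ht i.succ) ht_last
    have hp : 0 < p := (Nat.zero_le _).trans_lt (ht 0)
    calc ∑ i, t i * p ^ n i
        = t 0 * p ^ n 0 + ∑ i : Fin (l + 1), t i.succ * p ^ n i.succ := Fin.sum_univ_succ _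
      _ ≤ t 0 * p ^ n 0 + p ^ n 0 := by
        gcongr
        exact h_tail.trans (Nat.pow_le_pow_right hp (hn (Fin.succ_pos 0)))
      _ = (t 0 + 1) * p ^ n 0 := by ring
      _ ≤ p * p ^ n 0 := Nat.mul_le_mul_right _ (ht 0)
      _ = p ^ (n 0 + 1) := (pow_succ' p (n 0)).symm

theorem padicValNat_factorial_sum_mul_pow_pred_add {p l : ℕ} [hp : Fact p.Prime]
    {n t : Fin (l + 1) → ℕ} (hn : StrictAnti n) (ht : ∀ i : Fin l, t i.castSucc < p)
    (ht_last_ne : t (Fin.last l) ≠ 0) (ht_last : t (Fin.last l) ≤ p) :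
    padicValNat p (∑ i, t i * p ^ n i - 1)! + n (Fin.last l) =
      ∑ i, t i * ∑ j ∈ range (n i), p ^ j := by
  induction l with
  | zero =>
    have h_pred_lt : t 0 - 1 < p := (Nat.sub_one_lt ht_last_ne).trans_le ht_last
    simpa [padicValNat_factorial_eq_zero_of_lt h_pred_lt] using
      padicValNat_factorial_mul_pow_pred_add (p := p) ht_last_ne (n 0)
  | succ l ih =>
    have hn_tail : StrictAnti (n ∘ Fin.succ) := hn.comp_strictMono Fin.strictMono_succ
    have ht_zero : t 0 < p := ht 0
    have ih_tail := ih (t := t ∘ Fin.succ) hn_tail (fun i => ht i.succ) ht_last_ne ht_last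
    have h_le : ∑ i : Fin (l + 1), t i.succ * p ^ n i.succ ≤ p ^ n 0 :=
      (sum_mul_pow_le_pow_succ hn_tail (fun i => ht i.succ) ht_last).trans
        (Nat.pow_le_pow_right hp.out.pos (hn (Fin.succ_pos 0)))
    have h_pos : 0 < ∑ i : Fin (l + 1), t i.succ * p ^ n i.succ :=
      sum_pos' (fun _ _ => Nat.zero_le _) ⟨Fin.last l, mem_univ _,
        Nat.mul_pos (Nat.pos_of_ne_zero ht_last_ne) (pow_pos hp.out.pos _)⟩
    have h_split : ∑ i, t i * p ^ n i - 1 =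
        t 0 * p ^ n 0 + (∑ i : Fin (l + 1), t i.succ * p ^ n i.succ - 1) := by
      rw [Fin.sum_univ_succ, Nat.add_sub_assoc h_pos]
    simp only [Function.comp_apply, Fin.succ_last] at ih_tail
    rw [h_split,
      padicValNat_factorial_mul_pow_add (t 0) ((Nat.sub_one_lt h_pos.ne').trans_le h_le),
      padicValNat_factorial_eq_zero_of_lt ht_zero, zero_add, add_assoc, ih_tail]
    exact (Fin.sum_univ_succ fun i => t i * ∑ j ∈ range (n i), p ^ j).symm

theorem pow_not_dvd_factorial_pred_of_repunit_rep (p : ℕ) (hp : p.Prime) (l : ℕ)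
    (n t : Fin (l + 1) → ℕ) (hanti : StrictAnti n) (hnpos : ∀ i, 0 < n i)
    (ht : ∀ i : Fin (l + 1), i ≠ Fin.last l → 1 ≤ t i ∧ t i ≤ p - 1)
    (htl : 1 ≤ t (Fin.last l) ∧ t (Fin.last l) ≤ p) :
    ¬ p ^ (∑ i, t i * ((p ^ n i - 1) / (p - 1))) ∣
      Nat.factorial ((∑ i, t i * p ^ n i) - 1) := by
  have : Fact p.Prime := ⟨hp⟩
  have ht_lt (i : Fin l) : t i.castSucc < p :=
    Nat.lt_of_le_pred hp.pos (ht _ i.castSucc_ne_last).2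
  have h_val := padicValNat_factorial_sum_mul_pow_pred_add hanti ht_lt
    (Nat.one_le_iff_ne_zero.mp htl.1) htl.2
  simp only [Nat.geomSum_eq hp.two_le] at h_val
  rw [padicValNat_dvd_iff_le (Nat.factorial_ne_zero _), ← h_val, not_le]
  exact Nat.lt_add_of_pos_right (hnpos _)
end

section
/- Let p be a prime and n ≥ 1 a natural number. Then the smallest natural number m such that p^((p^n - 1)/(p - 1)) divides m! is exactly p^n. -/
/-!
By Legendre's formula, `(p - 1) * v_p (m!) < m` for `m ≠ 0`, so `(p - 1) * k < S (p ^ k)` whenever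
`k ≠ 0`. The repunit `k = 1 + p + ⋯ + p ^ (n - 1)` is exactly `v_p ((p ^ n)!)`, so
`S (p ^ k) ≤ p ^ n`; since `(p - 1) * k = p ^ n - 1`, the two bounds leave only `p ^ n`.
-/

/-- The Smarandache function: the smallest `m` such that `n` divides `m!`. -/
noncomputable def S (n : ℕ) : ℕ := sInf {m : ℕ | n ∣ Nat.factorial m}

theorem S_le_iff {n m : ℕ} (hn : n ≠ 0) : S n ≤ m ↔ n ∣ m.factorial := by
  refine ⟨fun hle ↦ ?_, fun hdvd ↦ Nat.sInf_le hdvd⟩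
  have hS : n ∣ (S n).factorial :=
    Nat.sInf_mem (s := {m | n ∣ m.factorial}) ⟨n, Nat.dvd_factorial hn.pos le_rfl⟩
  exact hS.trans (Nat.factorial_dvd_factorial hle)

theorem sub_one_mul_lt_of_pow_dvd_factorial {p k m : ℕ} (hp : p.Prime) (hm : m ≠ 0)
    (hdvd : p ^ k ∣ m.factorial) : (p - 1) * k < m := by
  have : Fact p.Prime := ⟨hp⟩
  calc
    (p - 1) * k ≤ (p - 1) * padicValNat p m.factorial :=
      Nat.mul_le_mul_left _ ((padicValNat_dvd_iff_le m.factorial_ne_zero).mp hdvd)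
    _ < m := sub_one_mul_padicValNat_factorial_lt_of_ne_zero p hm

theorem sub_one_mul_lt_S_prime_pow {p k : ℕ} (hp : p.Prime) (hk : k ≠ 0) :
    (p - 1) * k < S (p ^ k) := by
  have hdvd : p ^ k ∣ (S (p ^ k)).factorial := (S_le_iff (pow_ne_zero k hp.ne_zero)).mp le_rfl
  refine sub_one_mul_lt_of_pow_dvd_factorial hp (fun hS ↦ ?_) hdvd
  rw [hS, Nat.factorial_zero, Nat.dvd_one] at hdvd
  exact (Nat.one_lt_pow hk hp.one_lt).ne' hdvd

theorem prime_pow_geom_sum_dvd_factorial {p : ℕ} (hp : p.Prime) (n : ℕ) :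
    p ^ (∑ i ∈ Finset.range n, p ^ i) ∣ (p ^ n).factorial := by
  rw [← hp.multiplicity_factorial_pow]
  exact pow_multiplicity_dvd p _

theorem smarandache_prime_pow_repunit (p : ℕ) (hp : p.Prime) (n : ℕ) (hn : 1 ≤ n) :
    S (p ^ ((p ^ n - 1) / (p - 1))) = p ^ n := by
  rw [← Nat.geomSum_eq hp.two_le]
  set k := ∑ i ∈ Finset.range n, p ^ i
  have hupper : S (p ^ k) ≤ p ^ n :=
    (S_le_iff (pow_ne_zero k hp.ne_zero)).mpr (prime_pow_geom_sum_dvd_factorial hp n)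
  have hk : k ≠ 0 := (geom_sum_pos p.zero_le (Nat.one_le_iff_ne_zero.mp hn)).ne'
  have hlower : p ^ n - 1 < S (p ^ k) := calc
    p ^ n - 1 = (p - 1) * k := by rw [mul_comm, geom_sum_mul_of_one_le hp.one_le]
    _ < S (p ^ k) := sub_one_mul_lt_S_prime_pow hp hk
  exact le_antisymm hupper (Nat.le_of_pred_lt hlower)
end

section
/- Let a and b be positive integers that are coprime. Then S(a·b) = max(S(a), S(b)), where S(n) is the smallest natural number m with n ∣ m!. -/
theorem dvd_factorial_S {n : ℕ} (hn : 0 < n) : n ∣ (S n).factorial :=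
  Nat.sInf_mem (s := {m | n ∣ m.factorial}) ⟨n, Nat.dvd_factorial hn le_rfl⟩

/-- `S` is lower adjoint to the factorial, from divisibility to the usual order; lower adjoints
preserve joins, which are `lcm` for divisibility and `max` for the usual order. -/
theorem S_le_iff_dvd_factorial {n m : ℕ} (hn : 0 < n) : S n ≤ m ↔ n ∣ m.factorial :=
  ⟨fun h ↦ (dvd_factorial_S hn).trans (Nat.factorial_dvd_factorial h), fun h ↦ Nat.sInf_le h⟩

theorem smarandache_mul_coprime_general {a b : ℕ} (ha : 0 < a) (hb : 0 < b) :
    S (a.lcm b) = max (S a) (S b) :=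
  eq_of_forall_ge_iff fun m ↦ calc
    S (a.lcm b) ≤ m ↔ a.lcm b ∣ m.factorial := S_le_iff_dvd_factorial (Nat.lcm_pos ha hb)
    _ ↔ a ∣ m.factorial ∧ b ∣ m.factorial := Nat.lcm_dvd_iff
    _ ↔ S a ≤ m ∧ S b ≤ m :=
      and_congr (S_le_iff_dvd_factorial ha).symm (S_le_iff_dvd_factorial hb).symm
    _ ↔ max (S a) (S b) ≤ m := max_le_iff.symm

theorem smarandache_mul_coprime (a b : ℕ) (ha : 0 < a) (hb : 0 < b)
    (hab : Nat.Coprime a b) : S (a * b) = max (S a) (S b) := by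
  rw [← hab.lcm_eq_mul, smarandache_mul_coprime_general ha hb]
end
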